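/- For n > 1 and d ≥ 3, the maximum contact number c(n,d) of a packing of n unit balls in ℝ^d satisfies c(n,d) < (1/2)·k(d)·n − (1/2^d)·δ_d^(−(d−1)/d)·n^((d−1)/d), where k(d) is the kissing number and δ_d the sphere packing density in ℝ^d. -/

import Mathlib

open scoped Classical ENNReal
open MeasureTheory

noncomputable section

/-- Twice the contact number: the number of ordered pairs of distinct centers in `P`
at distance exactly `2`. -/
def contactsOrdered {d : ℕ} (P : Finset (EuclideanSpace ℝ (Fin d))) : ℕ :=
  (P.offDiag.filter fun p => dist p.1 p.2 = 2).card

/-- The kissing number `k(d)`: the largest number of non-overlapping unit balls that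
can touch a fixed unit ball in `ℝ^d`. -/
def kissingNumber (d : ℕ) : ℕ :=
  sSup {m : ℕ | ∃ c : Fin m → EuclideanSpace ℝ (Fin d),
    (∀ i, dist (c i) 0 = 2) ∧ ∀ i j, i ≠ j → 2 ≤ dist (c i) (c j)}

/-- The sphere packing density `δ_d`: the supremum over all unit ball packings of
`ℝ^d` of the upper density of the packing. -/
def spherePackingDensity (d : ℕ) : ℝ :=
  sSup {x : ℝ | ∃ C : Set (EuclideanSpace ℝ (Fin d)),
    (∀ p ∈ C, ∀ q ∈ C, p ≠ q → 2 ≤ dist p q) ∧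
    x = Filter.limsup
      (fun R : ℝ =>
        (volume ((⋃ c ∈ C, Metric.closedBall c 1) ∩
            Metric.ball (0 : EuclideanSpace ℝ (Fin d)) R)).toReal /
          (volume (Metric.ball (0 : EuclideanSpace ℝ (Fin d)) R)).toReal)
      Filter.atTop}

open scoped Pointwise


theorem vol_add_real_aux {K L C : Set ℝ} (hK : IsCompact K) (hL : IsCompact L)
    (hK0 : K.Nonempty) (hL0 : L.Nonempty) (h : ∀ x ∈ K, ∀ y ∈ L, x + y ∈ C) :
    volume K + volume L ≤ volume C := by
  obtain ⟨a, haK, ha⟩ := hK.exists_isGreatest hK0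
  obtain ⟨b, hbL, hb⟩ := hL.exists_isLeast hL0
  have h1 : volume ((fun x => x + b) '' K) = volume K := by
    simp [Set.image_add_right]
  have h2 : volume ((fun x => a + x) '' L) = volume L := by
    simp [Set.image_add_left]
  have hm2 : MeasurableSet ((fun x => a + x) '' L) :=
    (hL.image (continuous_const.add continuous_id)).measurableSet
  have hsub : ((fun x => x + b) '' K) ∪ ((fun x => a + x) '' L) ⊆ C := by
    rintro _ (⟨x, hx, rfl⟩ | ⟨x, hx, rfl⟩)
    · exact h x hx b hbL
    · exact h a haK x hx
  have hinter0 : volume (((fun x => x + b) '' K) ∩ ((fun x => a + x) '' L)) = 0 := by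
    refine measure_mono_null (t := {a + b}) ?_ (by simp)
    rintro z ⟨⟨x, hx, rfl⟩, ⟨y, hy, hxy⟩⟩
    have := ha hx
    have := hb hy
    simp only at hxy
    simp only [Set.mem_singleton_iff]
    linarith
  calc volume K + volume L
      = volume (((fun x => x + b) '' K) ∪ ((fun x => a + x) '' L)) := by
        rw [← add_zero (volume (_ ∪ _)), ← hinter0, measure_union_add_inter _ hm2, h1, h2]
    _ ≤ volume C := measure_mono hsub

theorem vol_add_real {A B C : Set ℝ} (hA : MeasurableSet A) (hB : MeasurableSet B)
    (hA0 : A.Nonempty) (hB0 : B.Nonempty) (h : ∀ x ∈ A, ∀ y ∈ B, x + y ∈ C) :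
    volume A + volume B ≤ volume C := by
  have key : ∀ {S : Set ℝ}, MeasurableSet S → S.Nonempty → ∀ r < volume S,
      ∃ K ⊆ S, IsCompact K ∧ K.Nonempty ∧ r < volume K := by
    intro S hS _ r hr
    obtain ⟨K, hKS, hK, hrK⟩ := hS.exists_lt_isCompact hr
    exact ⟨K, hKS, hK, nonempty_of_measure_ne_zero (ne_bot_of_gt hrK), hrK⟩
  obtain ⟨a, ha⟩ := hA0
  obtain ⟨b, hb⟩ := hB0
  by_cases hA1 : volume A = 0
  · rw [hA1, zero_add]
    calc volume B = volume ((fun x => a + x) '' B) := by simp [Set.image_add_left]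
      _ ≤ _ := measure_mono (by rintro _ ⟨x, hx, rfl⟩; exact h a ha x hx)
  by_cases hB1 : volume B = 0
  · rw [hB1, add_zero]
    calc volume A = volume ((fun x => x + b) '' A) := by simp [Set.image_add_right]
      _ ≤ _ := measure_mono (by rintro _ ⟨x, hx, rfl⟩; exact h x hx b hb)
  refine le_of_forall_lt fun q hq => ?_
  obtain ⟨r, hr, s, hs, hq'⟩ := ENNReal.exists_lt_add_of_lt_add hq hA1 hB1
  obtain ⟨K, hKA, hK, hK0, hr'⟩ := key hA ⟨a, ha⟩ r hr
  obtain ⟨L, hLB, hL, hL0, hs'⟩ := key hB ⟨b, hb⟩ s hs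
  exact (hq'.trans_le (add_le_add hr'.le hs'.le)).trans_le
    (vol_add_real_aux hK hL hK0 hL0 fun x hx y hy => h x (hKA hx) y (hLB hy))

theorem vol_comb_real {A B C : Set ℝ} (hA : MeasurableSet A) (hB : MeasurableSet B)
    (hA0 : A.Nonempty) (hB0 : B.Nonempty) {l : ℝ} (hl : 0 < l) (hl1 : l < 1)
    (h : ∀ x ∈ A, ∀ y ∈ B, (1 - l) * x + l * y ∈ C) :
    ENNReal.ofReal (1 - l) * volume A + ENNReal.ofReal l * volume B ≤ volume C := by
  have e1 : ∀ {c : ℝ}, 0 < c → ∀ S : Set ℝ, volume (c • S) = ENNReal.ofReal c * volume S := by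
    intro c hc S
    rw [Measure.addHaar_smul_of_nonneg _ hc.le]; simp
  have hl' : 0 < 1 - l := by linarith
  rw [← e1 hl', ← e1 hl]
  refine vol_add_real (hA.const_smul₀ _) (hB.const_smul₀ _) hA0.smul_set hB0.smul_set ?_
  rintro _ ⟨x, hx, rfl⟩ _ ⟨y, hy, rfl⟩
  exact h x hx y hy

theorem layer_cake_min {α : Type*} [MeasurableSpace α] {μ : Measure α} [SFinite μ]
    {f : α → ℝ≥0∞} (hf : Measurable f) {a : ℝ} (ha : 0 < a) :
    ∫⁻ x, min (f x) (ENNReal.ofReal a) ∂μ =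
      ENNReal.ofReal a * ∫⁻ t in Set.Ioo (0:ℝ) 1, μ {x | ENNReal.ofReal (t * a) < f x} := by
  have hmeas : MeasurableSet {p : α × ℝ | ENNReal.ofReal (p.2 * a) < f p.1} :=
    measurableSet_lt (by fun_prop) (by fun_prop)
  have inner : ∀ x, min (f x) (ENNReal.ofReal a) = ENNReal.ofReal a *
      ∫⁻ t in Set.Ioo (0:ℝ) 1, Set.indicator {p : α × ℝ | ENNReal.ofReal (p.2 * a) < f p.1} 1 (x, t) := by
    intro x
    have : (fun t : ℝ => Set.indicator {p : α × ℝ | ENNReal.ofReal (p.2 * a) < f p.1} (1 : α × ℝ → ℝ≥0∞) (x, t))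
      = Set.indicator {t : ℝ | ENNReal.ofReal (t * a) < f x} 1 := by
      ext t; simp [Set.indicator]
    rw [this, lintegral_indicator_one (measurableSet_lt (by fun_prop) (by fun_prop)),
      Measure.restrict_apply (measurableSet_lt (by fun_prop) (by fun_prop))]
    rcases le_total (ENNReal.ofReal a) (f x) with h | h
    · have : {t : ℝ | ENNReal.ofReal (t * a) < f x} ∩ Set.Ioo 0 1 = Set.Ioo 0 1 := by
        apply Set.inter_eq_right.2
        intro t ht
        refine lt_of_lt_of_le ?_ h
        rw [ENNReal.ofReal_lt_ofReal_iff ha]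
        nlinarith [ht.2]
      rw [this, min_eq_right h]; simp
    · have hfin : f x ≠ ∞ := ne_top_of_le_ne_top ENNReal.ofReal_ne_top h
      have hx : f x = ENNReal.ofReal (f x).toReal := (ENNReal.ofReal_toReal hfin).symm
      have hle : (f x).toReal ≤ a := by
        rw [hx] at h; exact (ENNReal.ofReal_le_ofReal_iff ha.le).1 h
      have : {t : ℝ | ENNReal.ofReal (t * a) < f x} ∩ Set.Ioo 0 1 = Set.Ioo 0 ((f x).toReal / a) := by
        ext t
        simp only [Set.mem_inter_iff, Set.mem_ofPred_eq, Set.mem_Ioo]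
        rw [lt_div_iff₀ ha]
        constructor
        · rintro ⟨h1, h2, h3⟩
          refine ⟨h2, ?_⟩
          rw [hx, ENNReal.ofReal_lt_ofReal_iff'] at h1
          exact h1.1
        · rintro ⟨h1, h2⟩
          refine ⟨?_, h1, ?_⟩
          · rw [hx, ENNReal.ofReal_lt_ofReal_iff']
            exact ⟨h2, lt_of_le_of_lt (by positivity) h2⟩
          · by_contra h3
            nlinarith
      rw [this, min_eq_left h, Real.volume_Ioo, ← ENNReal.ofReal_mul ha.le, sub_zero,
        mul_div_cancel₀ _ ha.ne', ← hx]
  simp_rw [inner]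
  rw [lintegral_const_mul']
  swap
  · exact ENNReal.ofReal_ne_top
  congr 1
  rw [lintegral_lintegral_swap]
  · refine lintegral_congr fun t => ?_
    rw [← lintegral_indicator_one (measurableSet_lt (by fun_prop) (by fun_prop))]
    refine lintegral_congr fun x => ?_
    simp [Set.indicator]
  · exact (measurable_one.indicator hmeas).aemeasurable

def PL (E : Type*) [AddCommGroup E] [Module ℝ E] [MeasureSpace E] : Prop :=
  ∀ (l : ℝ), 0 < l → l < 1 → ∀ f g h : E → ℝ≥0∞, Measurable f → Measurable g → Measurable h →
    (∀ x y, f x ^ (1 - l) * g y ^ l ≤ h ((1 - l) • x + l • y)) →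
    (∫⁻ x, f x) ^ (1 - l) * (∫⁻ x, g x) ^ l ≤ ∫⁻ x, h x

theorem amgm_ennreal (l : ℝ) (hl : 0 < l) (hl1 : l < 1) (x y : ℝ≥0∞) :
    x ^ (1 - l) * y ^ l ≤ ENNReal.ofReal (1 - l) * x + ENNReal.ofReal l * y := by
  have h1 : 0 < 1 - l := by linarith
  by_cases hx : x = ∞
  · subst hx; rw [ENNReal.mul_top (by simpa using hl1)]; simp
  by_cases hy : y = ∞
  · subst hy; rw [ENNReal.mul_top (by simpa using hl)]; simp
  lift x to NNReal using hx
  lift y to NNReal using hy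
  have := NNReal.geom_mean_le_arith_mean2_weighted (1 - l).toNNReal l.toNNReal x y
    (by rw [← Real.toNNReal_add h1.le hl.le]; simp)
  rw [Real.coe_toNNReal _ h1.le, Real.coe_toNNReal _ hl.le] at this
  rw [← ENNReal.coe_rpow_of_nonneg _ h1.le, ← ENNReal.coe_rpow_of_nonneg _ hl.le]
  unfold ENNReal.ofReal
  exact_mod_cast this

theorem trunc_seq {α : Type*} [MeasurableSpace α] {μ : Measure α}
    {f : α → ℝ≥0∞} (hf : Measurable f) (h0 : ∫⁻ x, f x ∂μ ≠ 0) :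
    ∃ a : ℕ → ℝ, (∀ n, 0 < a n) ∧ (∀ n, ∃ x, ENNReal.ofReal (a n) < f x) ∧
      Filter.Tendsto (fun n => ∫⁻ x, min (f x) (ENNReal.ofReal (a n)) ∂μ) Filter.atTop
        (nhds (∫⁻ x, f x ∂μ)) := by
  have hM : 0 < ⨆ x, f x := by
    rw [pos_iff_ne_zero]
    intro h
    apply h0
    simp only [ENNReal.iSup_eq_zero] at h
    simp [h]
  obtain ⟨u, hu, huM, hut⟩ := exists_seq_strictMono_tendsto' hM
  have e : ∀ n, ENNReal.ofReal (u n).toReal = u n := fun n =>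
    ENNReal.ofReal_toReal (huM n).2.ne_top
  refine ⟨fun n => (u n).toReal, fun n => ENNReal.toReal_pos (huM n).1.ne' (huM n).2.ne_top,
    fun n => ?_, ?_⟩
  · rw [e]; exact lt_iSup_iff.1 (huM n).2
  · simp only [e]
    refine lintegral_tendsto_of_tendsto_of_monotone (fun n => by fun_prop) ?_ ?_
    · exact Filter.Eventually.of_forall fun x i j hij => min_le_min_left _ (hu.monotone hij)
    · refine Filter.Eventually.of_forall fun x => ?_
      have : f x = min (f x) (⨆ x, f x) := (min_eq_left (le_iSup f x)).symm
      conv => rhs; rw [this]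
      exact tendsto_const_nhds.min hut

theorem PL_real : PL ℝ := by
  intro l hl hl1 f g h hf hg hh hfgh
  have h1 : 0 < 1 - l := by linarith
  have key : ∀ a b : ℝ, 0 < a → 0 < b → (∃ x, ENNReal.ofReal a < f x) →
      (∃ x, ENNReal.ofReal b < g x) →
      (∫⁻ x, min (f x) (ENNReal.ofReal a)) ^ (1 - l) *
        (∫⁻ x, min (g x) (ENNReal.ofReal b)) ^ l ≤ ∫⁻ x, h x := by
    rintro a b ha hb ⟨x0, hx0⟩ ⟨y0, hy0⟩
    have hc : 0 < a ^ (1 - l) * b ^ l := by positivity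
    have hcE : ENNReal.ofReal (a ^ (1 - l) * b ^ l) =
        ENNReal.ofReal a ^ (1 - l) * ENNReal.ofReal b ^ l := by
      rw [ENNReal.ofReal_mul (by positivity), ENNReal.ofReal_rpow_of_pos ha,
        ENNReal.ofReal_rpow_of_pos hb]
    refine le_trans ?_ (lintegral_mono (μ := volume)
      (fun x => min_le_left (h x) (ENNReal.ofReal (a ^ (1 - l) * b ^ l))))
    rw [layer_cake_min hf ha, layer_cake_min hg hb, layer_cake_min hh hc,
      ENNReal.mul_rpow_of_nonneg _ _ h1.le, ENNReal.mul_rpow_of_nonneg _ _ hl.le,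
      mul_mul_mul_comm, hcE]
    gcongr
    refine (amgm_ennreal l hl hl1 _ _).trans ?_
    rw [← lintegral_const_mul' _ _ ENNReal.ofReal_ne_top,
      ← lintegral_const_mul' _ _ ENNReal.ofReal_ne_top]
    refine (le_lintegral_add _ _).trans ?_
    refine setLIntegral_mono' measurableSet_Ioo fun t ht => ?_
    refine vol_comb_real (measurableSet_lt measurable_const hf)
      (measurableSet_lt measurable_const hg) ?_ ?_ hl hl1 ?_
    · refine ⟨x0, lt_of_le_of_lt (ENNReal.ofReal_le_ofReal ?_) hx0⟩
      nlinarith [ht.2]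
    · refine ⟨y0, lt_of_le_of_lt (ENNReal.ofReal_le_ofReal ?_) hy0⟩
      nlinarith [ht.2]
    · intro x hx y hy
      simp only [Set.mem_ofPred_eq] at hx hy ⊢
      refine lt_of_lt_of_le ?_ (hfgh x y)
      have e : t * (a ^ (1 - l) * b ^ l) = (t * a) ^ (1 - l) * (t * b) ^ l := by
        rw [Real.mul_rpow ht.1.le ha.le, Real.mul_rpow ht.1.le hb.le, mul_mul_mul_comm,
          ← Real.rpow_add ht.1]
        simp
      have hta : 0 < t * a := mul_pos ht.1 ha
      have htb : 0 < t * b := mul_pos ht.1 hb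
      rw [e, ENNReal.ofReal_mul (by positivity), ← ENNReal.ofReal_rpow_of_pos hta,
        ← ENNReal.ofReal_rpow_of_pos htb]
      exact ENNReal.mul_lt_mul (ENNReal.rpow_lt_rpow hx h1) (ENNReal.rpow_lt_rpow hy hl)
  by_cases hf0 : ∫⁻ x, f x = 0
  · simp [hf0, h1]
  by_cases hg0 : ∫⁻ x, g x = 0
  · simp [hg0, hl]
  obtain ⟨a, ha, hax, hat⟩ := trunc_seq hf hf0
  obtain ⟨b, hb, hbx, hbt⟩ := trunc_seq hg hg0
  refine le_of_tendsto' (ENNReal.Tendsto.mul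
    ((ENNReal.continuous_rpow_const (y := 1 - l)).tendsto _ |>.comp hat) (Or.inl ?_)
    ((ENNReal.continuous_rpow_const (y := l)).tendsto _ |>.comp hbt) (Or.inl ?_))
    (fun n => key (a n) (b n) (ha n) (hb n) (hax n) (hbx n))
  · simp [ENNReal.rpow_eq_zero_iff, hf0, h1.not_gt]
  · simp [ENNReal.rpow_eq_zero_iff, hg0, hl.not_gt]

theorem PL_prod {E : Type*} [AddCommGroup E] [Module ℝ E] [MeasureSpace E]
    [SFinite (volume : Measure E)] (hE : PL E) : PL (ℝ × E) := by
  intro l hl hl1 f g h hf hg hh hfgh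
  simp only [Measure.volume_eq_prod]
  rw [lintegral_prod _ hf.aemeasurable, lintegral_prod _ hg.aemeasurable,
    lintegral_prod _ hh.aemeasurable]
  refine PL_real l hl hl1 _ _ _ hf.lintegral_prod_right' hg.lintegral_prod_right'
    hh.lintegral_prod_right' fun s t => ?_
  exact hE l hl hl1 _ _ _ (by fun_prop) (by fun_prop) (by fun_prop)
    fun x y => hfgh (s, x) (t, y)

theorem PL_equiv {E F : Type*} [AddCommGroup E] [Module ℝ E] [MeasureSpace E]
    [AddCommGroup F] [Module ℝ F] [MeasureSpace F] (e : E → F)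
    (he : MeasurePreserving e) (hlin : ∀ (a b : ℝ) (x y : E), e (a • x + b • y) = a • e x + b • e y)
    (hE : PL E) : PL F := by
  intro l hl hl1 f g h hf hg hh hfgh
  rw [← he.lintegral_comp hf, ← he.lintegral_comp hg, ← he.lintegral_comp hh]
  refine hE l hl hl1 _ _ _ (hf.comp he.measurable) (hg.comp he.measurable)
    (hh.comp he.measurable) fun x y => ?_
  simp only [hlin]
  exact hfgh _ _

theorem PL_pi (n : ℕ) : PL (Fin n → ℝ) := by
  induction n with
  | zero =>
    intro l hl hl1 f g h hf hg hh hfgh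
    simp only [lintegral_unique, volume_pi, Measure.pi_univ]
    have e : (1 - l) • (default : Fin 0 → ℝ) + l • default = default := Subsingleton.elim _ _
    have := hfgh default default
    rw [e] at this
    simp only [Finset.univ_eq_empty, Finset.prod_empty, mul_one]
    convert this
  | succ n ih =>
    refine PL_equiv _ (volume_preserving_piFinSuccAbove (fun _ => ℝ) 0).symm ?_ (PL_prod ih)
    intro a b x y
    ext i
    refine Fin.cases ?_ (fun j => ?_) i <;> simp [MeasurableEquiv.piFinSuccAbove]

theorem PL_eucl (d : ℕ) : PL (EuclideanSpace ℝ (Fin d)) :=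
  PL_equiv _ (PiLp.volume_preserving_toLp (Fin d)) (by intros; rfl) (PL_pi d)

theorem mult_BM {d : ℕ} {A B C : Set (EuclideanSpace ℝ (Fin d))} (hA : MeasurableSet A)
    (hB : MeasurableSet B) (hC : MeasurableSet C) {l : ℝ} (hl : 0 < l) (hl1 : l < 1)
    (h : ∀ x ∈ A, ∀ y ∈ B, (1 - l) • x + l • y ∈ C) :
    volume A ^ (1 - l) * volume B ^ l ≤ volume C := by
  have h1 : 0 < 1 - l := by linarith
  have := PL_eucl d l hl hl1 (A.indicator 1) (B.indicator 1) (C.indicator 1)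
    (measurable_one.indicator hA) (measurable_one.indicator hB) (measurable_one.indicator hC) ?_
  · simpa only [lintegral_indicator_one, hA, hB, hC] using this
  · intro x y
    by_cases hx : x ∈ A
    · by_cases hy : y ∈ B
      · simp [hx, hy, h x hx y hy]
      · simp [hy, hl]
    · simp [hx, h1]

theorem BM_grow {d : ℕ} {A C : Set (EuclideanSpace ℝ (Fin d))} (hA : MeasurableSet A)
    (hC : MeasurableSet C) {ρ ε : ℝ} (hρ : 0 < ρ) (hε : 0 < ε)
    (hvol : volume A = ENNReal.ofReal (ρ ^ d) *
      volume (Metric.ball (0 : EuclideanSpace ℝ (Fin d)) 1))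
    (h : ∀ x ∈ A, ∀ y, ‖y‖ < ε → x + y ∈ C) :
    ENNReal.ofReal ((ρ + ε) ^ d) * volume (Metric.ball (0 : EuclideanSpace ℝ (Fin d)) 1)
      ≤ volume C := by
  have hs : 0 < ρ + ε := by positivity
  have hl : 0 < ε / (ρ + ε) := by positivity
  have hl1 : ε / (ρ + ε) < 1 := by rw [div_lt_one hs]; linarith
  have e1 : 1 - ε / (ρ + ε) = ρ / (ρ + ε) := by field_simp; ring
  have hB := mult_BM (A := ((ρ + ε) / ρ) • A) (B := Metric.ball 0 (ρ + ε))
    (hA.const_smul₀ _) Metric.isOpen_ball.measurableSet hC hl hl1 ?_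
  · rw [Measure.addHaar_smul_of_nonneg _ (by positivity), Measure.addHaar_ball_of_pos _ _ hs,
      finrank_euclideanSpace_fin, hvol, ← mul_assoc, ← ENNReal.ofReal_mul (by positivity),
      ← mul_pow, div_mul_cancel₀ _ hρ.ne', ← ENNReal.rpow_add_of_nonneg _ _ (by linarith) hl.le,
      sub_add_cancel, ENNReal.rpow_one] at hB
    exact hB
  · rintro _ ⟨x, hx, rfl⟩ y hy
    rw [e1]
    simp only [smul_smul]
    have : ρ / (ρ + ε) * ((ρ + ε) / ρ) = 1 := by field_simp
    rw [this, one_smul]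
    apply h x hx
    rw [norm_smul, Real.norm_of_nonneg hl.le, div_mul_eq_mul_div, div_lt_iff₀ hs]
    rw [mem_ball_zero_iff] at hy
    nlinarith

/-- A `2`-separated configuration which is also `2`-separated modulo `Λ`. -/
def PP {d : ℕ} (Λ : AddSubgroup (EuclideanSpace ℝ (Fin d)))
    (X : Finset (EuclideanSpace ℝ (Fin d))) : Prop :=
  ∀ x ∈ X, ∀ y ∈ X, ∀ z ∈ Λ, (x ≠ y ∨ z ≠ 0) → 2 ≤ dist x (y + z)

theorem exists_lattice (d : ℕ) (M : ℝ) (hM : 0 < M) :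
    ∃ (Λ : AddSubgroup (EuclideanSpace ℝ (Fin d))) (F : Set (EuclideanSpace ℝ (Fin d))),
      Countable Λ ∧ IsAddFundamentalDomain Λ F ∧ MeasurableSet F ∧ Bornology.IsBounded F ∧
      volume F ≠ 0 ∧ ∀ z ∈ Λ, z ≠ 0 → M ≤ ‖z‖ := by
  let b : Module.Basis (Fin d) ℝ (EuclideanSpace ℝ (Fin d)) :=
    (EuclideanSpace.basisFun (Fin d) ℝ).toBasis.isUnitSMul (w := fun _ => M)
      (fun _ => isUnit_iff_ne_zero.2 hM.ne')
  have hb : ∀ i, b i = M • EuclideanSpace.single i (1 : ℝ) := by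
    intro i; simp [b, Module.Basis.isUnitSMul_apply]
  refine ⟨(Submodule.span ℤ (Set.range b)).toAddSubgroup, ZSpan.fundamentalDomain b, ?_,
    ZSpan.isAddFundamentalDomain' b _, ZSpan.fundamentalDomain_measurableSet b,
    ZSpan.fundamentalDomain_isBounded b, ZSpan.measure_fundamentalDomain_ne_zero b, ?_⟩
  · change Countable (Submodule.span ℤ (Set.range b))
    infer_instance
  · intro z hz hz0
    have hz' : z ∈ Submodule.span ℤ (Set.range b) := hz
    rw [Submodule.mem_span_range_iff_exists_fun] at hz'
    obtain ⟨c, rfl⟩ := hz'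
    have hco : ∀ j, (∑ i, c i • b i) j = c j * M := by
      intro j
      simp [hb, Finset.sum_apply, Pi.single_apply]
      ring
    have : ∃ j, c j ≠ 0 := by
      by_contra hcon
      push Not at hcon
      exact hz0 (by simp [hcon])
    obtain ⟨j, hj⟩ := this
    refine le_trans ?_ (PiLp.norm_apply_le _ j)
    rw [hco, norm_mul, Real.norm_of_nonneg hM.le]
    have : (1 : ℝ) ≤ ‖(c j : ℝ)‖ := by
      rw [Real.norm_eq_abs, ← Int.cast_abs]; exact_mod_cast Int.one_le_abs hj
    nlinarith

theorem PP_vol {d : ℕ} {Λ : AddSubgroup (EuclideanSpace ℝ (Fin d))} [Countable Λ]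
    {F : Set (EuclideanSpace ℝ (Fin d))} (hF : IsAddFundamentalDomain Λ F)
    {X : Finset (EuclideanSpace ℝ (Fin d))} (hX : PP Λ X) :
    volume ((⋃ z : Λ, ⋃ x ∈ X, Metric.ball (x + (z : EuclideanSpace ℝ (Fin d))) 1) ∩ F) =
      X.card * volume (Metric.ball (0 : EuclideanSpace ℝ (Fin d)) 1) := by
  set T : Set (EuclideanSpace ℝ (Fin d)) := ⋃ x ∈ X, Metric.ball x 1 with hT
  have hTm : MeasurableSet T := Finset.measurableSet_biUnion _ fun _ _ => measurableSet_ball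
  have hdisj : ∀ x ∈ X, ∀ y ∈ X, ∀ z ∈ Λ, ∀ w ∈ Λ, (x ≠ y ∨ z ≠ w) →
      Disjoint (Metric.ball (x + z) 1) (Metric.ball (y + w) 1) := by
    intro x hx y hy z hz w hw h
    apply Metric.ball_disjoint_ball
    have := hX x hx y hy (w - z) (Λ.sub_mem hw hz)
      (h.imp id fun h h' => h (sub_eq_zero.1 h').symm)
    rw [dist_eq_norm] at this ⊢
    have e : x + z - (y + w) = x - (y + (w - z)) := by abel
    rw [e]; linarith
  have hTv : volume T = X.card * volume (Metric.ball (0 : EuclideanSpace ℝ (Fin d)) 1) := by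
    rw [hT, measure_biUnion_finset]
    · simp [Measure.addHaar_ball_center]
    · intro x hx y hy hxy
      simpa using hdisj x hx y hy 0 Λ.zero_mem 0 Λ.zero_mem (Or.inl hxy)
    · exact fun _ _ => measurableSet_ball
  have hvadd : ∀ z : Λ, (⋃ x ∈ X, Metric.ball (x + (z : EuclideanSpace ℝ (Fin d))) 1) = z +ᵥ T := by
    intro z
    ext p
    rw [Set.mem_vadd_set_iff_neg_vadd_mem]
    simp only [hT, Set.mem_iUnion, Metric.mem_ball, dist_eq_norm]
    refine exists_congr fun x => exists_congr fun _ => ?_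
    have : (-z +ᵥ p : EuclideanSpace ℝ (Fin d)) = -(z : EuclideanSpace ℝ (Fin d)) + p := rfl
    rw [this]
    have e : p - (x + z) = -(z : EuclideanSpace ℝ (Fin d)) + p - x := by abel
    rw [e]
  rw [← hTv, hF.measure_eq_tsum T, Set.iUnion_inter, measure_iUnion₀]
  · simp_rw [hvadd]
  · intro z w hzw
    refine Disjoint.aedisjoint ?_
    refine Set.disjoint_left.2 fun p hp hq => ?_
    simp only [Set.mem_inter_iff, Set.mem_iUnion] at hp hq
    obtain ⟨⟨x, hx, hpx⟩, -⟩ := hp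
    obtain ⟨⟨y, hy, hpy⟩, -⟩ := hq
    exact Set.disjoint_left.1 (hdisj x hx y hy z z.2 w w.2
      (Or.inr fun h => hzw (Subtype.ext h))) hpx hpy
  · intro z
    exact (Finset.measurableSet_biUnion _ fun _ _ => measurableSet_ball).nullMeasurableSet.inter
      hF.nullMeasurableSet


theorem periodic_count {d : ℕ} {Λ : AddSubgroup (EuclideanSpace ℝ (Fin d))} [Countable Λ]
    {F : Set (EuclideanSpace ℝ (Fin d))} (hF : IsAddFundamentalDomain Λ F)
    {S : Set (EuclideanSpace ℝ (Fin d))}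
    (hSΛ : ∀ z : Λ, z +ᵥ S = S) {D : ℝ} (hD : ∀ x ∈ F, ∀ y ∈ F, dist x y ≤ D) (R : ℝ) :
    volume (S ∩ F) * volume (Metric.ball (0 : EuclideanSpace ℝ (Fin d)) (R - D)) ≤
      volume (S ∩ Metric.ball 0 R) * volume F := by
  rw [hF.measure_eq_tsum' (Metric.ball 0 (R - D)), hF.measure_eq_tsum' (S ∩ Metric.ball 0 R),
    ← ENNReal.tsum_mul_left, ← ENNReal.tsum_mul_right]
  refine ENNReal.tsum_le_tsum fun z => ?_
  rcases Set.eq_empty_or_nonempty (Metric.ball (0 : EuclideanSpace ℝ (Fin d)) (R - D) ∩ (z +ᵥ F))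
    with h | ⟨p, hp, hpF⟩
  · simp [h]
  · have hsub : z +ᵥ F ⊆ Metric.ball (0 : EuclideanSpace ℝ (Fin d)) R := by
      intro q hq
      obtain ⟨p', hp', rfl⟩ := hpF
      obtain ⟨q', hq', rfl⟩ := hq
      have h1 := hD q' hq' p' hp'
      have h2 : dist (z +ᵥ q') (z +ᵥ p') = dist q' p' := dist_vadd_cancel_left _ _ _
      rw [Metric.mem_ball] at hp ⊢
      have h3 := dist_triangle (z +ᵥ q') (z +ᵥ p') 0
      simp only at hp h3 ⊢
      linarith
    have e : S ∩ Metric.ball 0 R ∩ (z +ᵥ F) = z +ᵥ (S ∩ F) := by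
      rw [Set.vadd_set_inter, hSΛ, Set.inter_assoc, Set.inter_eq_right.2 hsub]
    rw [e, measure_vadd]
    refine mul_le_mul' le_rfl ?_
    calc _ ≤ volume (z +ᵥ F) := measure_mono Set.inter_subset_right
      _ = _ := measure_vadd _ _ _

theorem density_bdd (d : ℕ) (C : Set (EuclideanSpace ℝ (Fin d))) (R : ℝ) :
    (volume ((⋃ c ∈ C, Metric.closedBall c 1) ∩
            Metric.ball (0 : EuclideanSpace ℝ (Fin d)) R)).toReal /
          (volume (Metric.ball (0 : EuclideanSpace ℝ (Fin d)) R)).toReal ≤ 1 := by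
  refine div_le_one_of_le₀ ?_ ENNReal.toReal_nonneg
  exact ENNReal.toReal_mono measure_ball_lt_top.ne (measure_mono Set.inter_subset_right)

theorem le_density {d : ℕ} (C : Set (EuclideanSpace ℝ (Fin d)))
    (hC : ∀ p ∈ C, ∀ q ∈ C, p ≠ q → 2 ≤ dist p q) (c : ℝ) (g : ℝ → ℝ)
    (hg : Filter.Tendsto g Filter.atTop (nhds c))
    (hle : ∀ᶠ R in Filter.atTop, g R ≤ (volume ((⋃ c ∈ C, Metric.closedBall c 1) ∩
            Metric.ball (0 : EuclideanSpace ℝ (Fin d)) R)).toReal /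
          (volume (Metric.ball (0 : EuclideanSpace ℝ (Fin d)) R)).toReal) :
    c ≤ spherePackingDensity d := by
  have hb : ∀ C : Set (EuclideanSpace ℝ (Fin d)), Filter.IsBoundedUnder (· ≤ ·) Filter.atTop
      (fun R : ℝ => (volume ((⋃ c ∈ C, Metric.closedBall c 1) ∩
            Metric.ball (0 : EuclideanSpace ℝ (Fin d)) R)).toReal /
          (volume (Metric.ball (0 : EuclideanSpace ℝ (Fin d)) R)).toReal) := fun C =>
    ⟨1, by simpa using ⟨0, fun b _ => density_bdd d C b⟩⟩
  have hb' : ∀ C : Set (EuclideanSpace ℝ (Fin d)), Filter.IsCoboundedUnder (· ≤ ·) Filter.atTop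
      (fun R : ℝ => (volume ((⋃ c ∈ C, Metric.closedBall c 1) ∩
            Metric.ball (0 : EuclideanSpace ℝ (Fin d)) R)).toReal /
          (volume (Metric.ball (0 : EuclideanSpace ℝ (Fin d)) R)).toReal) := fun C =>
    Filter.IsBoundedUnder.isCoboundedUnder_le
      ⟨0, by simpa using ⟨0, fun b _ => by positivity⟩⟩
  rw [← hg.limsup_eq]
  refine (Filter.limsup_le_limsup hle hg.isBoundedUnder_ge.isCoboundedUnder_le (hb C)).trans ?_
  refine le_csSup ⟨1, ?_⟩ ⟨C, hC, rfl⟩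
  rintro _ ⟨C', -, rfl⟩
  exact Filter.limsup_le_of_le (hb' C') (Filter.Eventually.of_forall (density_bdd d C'))

theorem PP_density {d : ℕ} {Λ : AddSubgroup (EuclideanSpace ℝ (Fin d))} [Countable Λ]
    {F : Set (EuclideanSpace ℝ (Fin d))} (hF : IsAddFundamentalDomain Λ F)
    (hFb : Bornology.IsBounded F) (hF0 : volume F ≠ 0)
    {X : Finset (EuclideanSpace ℝ (Fin d))} (hX : PP Λ X) :
    X.card * (volume (Metric.ball (0 : EuclideanSpace ℝ (Fin d)) 1)).toReal ≤
      spherePackingDensity d * (volume F).toReal := by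
  have hFtop : volume F ≠ ∞ := hFb.measure_lt_top.ne
  have hFpos : 0 < (volume F).toReal := ENNReal.toReal_pos hF0 hFtop
  rw [← div_le_iff₀ hFpos]
  obtain ⟨D, hD⟩ := Metric.isBounded_iff.1 hFb
  set κ := volume (Metric.ball (0 : EuclideanSpace ℝ (Fin d)) 1) with hκ
  have hκ0 : 0 < κ.toReal :=
    ENNReal.toReal_pos (Metric.measure_ball_pos _ _ one_pos).ne' measure_ball_lt_top.ne
  set S := (⋃ z : Λ, ⋃ x ∈ X, Metric.ball (x + (z : EuclideanSpace ℝ (Fin d))) 1) with hS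
  set C : Set (EuclideanSpace ℝ (Fin d)) := {p | ∃ x ∈ X, ∃ z ∈ Λ, p = x + z} with hC
  have hSC : S ⊆ ⋃ c ∈ C, Metric.closedBall c 1 := by
    refine Set.iUnion_subset fun z => Set.iUnion₂_subset fun x hx => ?_
    refine Metric.ball_subset_closedBall.trans ?_
    exact Set.subset_biUnion_of_mem (u := fun c => Metric.closedBall c 1) ⟨x, hx, z, z.2, rfl⟩
  have hSsub : ∀ w : Λ, w +ᵥ S ⊆ S := by
    rintro w _ ⟨p, hp, rfl⟩
    simp only [hS, Set.mem_iUnion] at hp ⊢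
    obtain ⟨z, x, hx, hp⟩ := hp
    refine ⟨w + z, x, hx, ?_⟩
    rw [Metric.mem_ball, dist_eq_norm] at hp ⊢
    have : (w +ᵥ p : EuclideanSpace ℝ (Fin d)) = (w : EuclideanSpace ℝ (Fin d)) + p := rfl
    simp only [this, AddSubgroup.coe_add]
    have e : (w : EuclideanSpace ℝ (Fin d)) + p - (x + (w + z)) = p - (x + z) := by abel
    rwa [e]
  have hSinv : ∀ w : Λ, w +ᵥ S = S := by
    intro w
    refine (hSsub w).antisymm ?_
    have := Set.vadd_set_mono (a := w) (hSsub (-w))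
    simpa using this
  refine le_density C ?_ _ (fun R => X.card * κ.toReal / (volume F).toReal * ((R - D) / R) ^ d) ?_ ?_
  · rintro _ ⟨x, hx, z, hz, rfl⟩ _ ⟨y, hy, w, hw, rfl⟩ hne
    have := hX x hx y hy (w - z) (Λ.sub_mem hw hz) (by
      by_contra hcon
      push Not at hcon
      apply hne
      rw [hcon.1, sub_eq_zero.1 hcon.2])
    rw [dist_eq_norm] at this ⊢
    have e : x + z - (y + w) = x - (y + (w - z)) := by abel
    rwa [e]
  · have h1 : Filter.Tendsto (fun R : ℝ => (R - D) / R) Filter.atTop (nhds 1) := by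
      have : Filter.Tendsto (fun R : ℝ => 1 - D / R) Filter.atTop (nhds (1 - 0)) :=
        tendsto_const_nhds.sub (tendsto_const_nhds.div_atTop Filter.tendsto_id)
      rw [sub_zero] at this
      refine this.congr' ?_
      filter_upwards [Filter.eventually_gt_atTop 0] with R hR
      field_simp
    simpa using (h1.pow d).const_mul (X.card * κ.toReal / (volume F).toReal)
  · filter_upwards [Filter.eventually_gt_atTop 0, Filter.eventually_gt_atTop D] with R hR hRD
    have h := periodic_count hF hSinv (fun x hx y hy => hD hx hy) R
    rw [PP_vol hF hX, Measure.addHaar_ball_of_pos _ _ (by linarith : 0 < R - D)] at h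
    have hfin : volume ((⋃ c ∈ C, Metric.closedBall c 1) ∩
            Metric.ball (0 : EuclideanSpace ℝ (Fin d)) R) ≠ ∞ :=
      ((measure_mono Set.inter_subset_right).trans_lt measure_ball_lt_top).ne
    have h' := h.trans (mul_le_mul_left (measure_mono (Set.inter_subset_inter_left _ hSC)) _)
    have h2 := ENNReal.toReal_mono (ENNReal.mul_ne_top hfin hFtop) h'
    rw [Measure.addHaar_ball_of_pos _ _ hR]
    simp only [ENNReal.toReal_mul, finrank_euclideanSpace_fin, ENNReal.toReal_natCast,
      ENNReal.toReal_ofReal (pow_nonneg hR.le d),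
      ENNReal.toReal_ofReal (pow_nonneg (by linarith : 0 ≤ R - D) d)] at h2 ⊢
    rw [div_pow, div_mul_div_comm, div_le_div_iff₀ (by positivity) (by positivity)]
    rw [← hκ] at h2 ⊢
    have hRd : 0 < R ^ d := by positivity
    nlinarith [mul_le_mul_of_nonneg_right h2 hRd.le]


theorem PP_card_le {d : ℕ} {Λ : AddSubgroup (EuclideanSpace ℝ (Fin d))} [Countable Λ]
    {F : Set (EuclideanSpace ℝ (Fin d))} (hF : IsAddFundamentalDomain Λ F)
    (hFtop : volume F ≠ ∞)
    {X : Finset (EuclideanSpace ℝ (Fin d))} (hX : PP Λ X) :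
    X.card ≤ ⌊(volume F).toReal /
      (volume (Metric.ball (0 : EuclideanSpace ℝ (Fin d)) 1)).toReal⌋₊ := by
  have hκ0 : 0 < (volume (Metric.ball (0 : EuclideanSpace ℝ (Fin d)) 1)).toReal :=
    ENNReal.toReal_pos (Metric.measure_ball_pos _ _ one_pos).ne' measure_ball_lt_top.ne
  apply Nat.le_floor
  rw [le_div_iff₀ hκ0]
  have := ENNReal.toReal_mono hFtop
    ((PP_vol hF hX).symm.trans_le (measure_mono Set.inter_subset_right))
  simpa using this

theorem PP_of_sep {d : ℕ} {Λ : AddSubgroup (EuclideanSpace ℝ (Fin d))} {M D : ℝ}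
    (hΛ : ∀ z ∈ Λ, z ≠ 0 → M ≤ ‖z‖) {X : Finset (EuclideanSpace ℝ (Fin d))}
    (hsep : ∀ x ∈ X, ∀ y ∈ X, x ≠ y → 2 ≤ dist x y)
    (hD : ∀ x ∈ X, ∀ y ∈ X, dist x y ≤ D) (hM : D + 2 ≤ M) : PP Λ X := by
  intro x hx y hy z hz h
  by_cases hz0 : z = 0
  · subst hz0
    rw [add_zero]
    exact hsep x hx y hy (by simpa using h)
  · have h1 := hΛ z hz hz0
    have h2 := hD x hx y hy
    have h3 : ‖z‖ ≤ dist x y + dist x (y + z) := by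
      have : ‖z‖ = dist y (y + z) := by simp
      rw [this, dist_comm x y]
      exact dist_triangle _ _ _
    linarith

theorem PP_improve {d : ℕ} {Λ : AddSubgroup (EuclideanSpace ℝ (Fin d))} [Countable Λ]
    {F : Set (EuclideanSpace ℝ (Fin d))} (hF : IsAddFundamentalDomain Λ F)
    {X P : Finset (EuclideanSpace ℝ (Fin d))} (hX : PP Λ X) (hP : PP Λ P)
    (hmax : ∀ Y, PP Λ Y → Y.card ≤ X.card) :
    P.card * volume F ≤ X.card * volume (⋃ p ∈ P, Metric.closedBall p 2) := by
  set U := ⋃ p ∈ P, Metric.closedBall p 2 with hU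
  have hUm : MeasurableSet U := Finset.measurableSet_biUnion _ fun _ _ => measurableSet_closedBall
  -- set of bad translations for a given point
  let W : EuclideanSpace ℝ (Fin d) → Set (EuclideanSpace ℝ (Fin d)) := fun x =>
    ⋃ z : Λ, z +ᵥ ((fun t => x - t) ⁻¹' U)
  have hW : ∀ x t, t ∈ W x ↔ ∃ z ∈ Λ, ∃ p ∈ P, dist x (t + p + z) ≤ 2 := by
    intro x t
    simp only [W, Set.mem_iUnion, Set.mem_vadd_set_iff_neg_vadd_mem, Set.mem_preimage, hU,
      Metric.mem_closedBall, dist_eq_norm, Subtype.exists]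
    constructor
    · rintro ⟨z, hz, p, hp, h⟩
      refine ⟨-z, Λ.neg_mem hz, p, hp, ?_⟩
      have e : x - (t + p + -z) = x - (-z + t) - p := by abel
      rw [e]; exact h
    · rintro ⟨z, hz, p, hp, h⟩
      refine ⟨-z, Λ.neg_mem hz, p, hp, ?_⟩
      have e : x - (t + p + z) = x - (- -z + t) - p := by abel
      rw [e] at h; exact h
  have hpre : ∀ x, MeasurableSet ((fun t => x - t) ⁻¹' U) := fun x =>
    hUm.preimage (by fun_prop)
  have hWm : ∀ x, MeasurableSet (W x) := fun x =>
    MeasurableSet.iUnion fun z => (hpre x).const_vadd z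
  have hWv : ∀ x, volume (W x ∩ F) ≤ volume U := by
    intro x
    calc volume (W x ∩ F) = volume (⋃ z : Λ, (z +ᵥ ((fun t => x - t) ⁻¹' U)) ∩ F) := by
          rw [← Set.iUnion_inter]
      _ ≤ ∑' z : Λ, volume ((z +ᵥ ((fun t => x - t) ⁻¹' U)) ∩ F) := measure_iUnion_le _
      _ = volume ((fun t => x - t) ⁻¹' U) := (hF.measure_eq_tsum _).symm
      _ = volume U := (Measure.measurePreserving_sub_left volume x).measure_preimage hUm.nullMeasurableSet
  have hbad : ∀ t, P.card ≤ (X.filter fun x => t ∈ W x).card := by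
    intro t
    set X1 := X.filter fun x => t ∉ W x with hX1
    set P1 := P.image fun p => t + p with hP1
    have hold : ∀ x ∈ X1, ∀ p ∈ P, ∀ z ∈ Λ, 2 < dist x (t + p + z) := by
      intro x hx p hp z hz
      have := (Finset.mem_filter.1 hx).2
      rw [hW] at this
      push Not at this
      exact this z hz p hp
    have hdisj : Disjoint X1 P1 := by
      rw [Finset.disjoint_left]
      intro x hx hx'
      obtain ⟨p, hp, rfl⟩ := Finset.mem_image.1 hx'
      have := hold _ hx p hp 0 Λ.zero_mem
      simp at this
      linarith
    have hPP : PP Λ (X1 ∪ P1) := by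
      intro x hx y hy z hz h
      rcases Finset.mem_union.1 hx with hx | hx <;> rcases Finset.mem_union.1 hy with hy | hy
      · exact hX x (Finset.mem_filter.1 hx).1 y (Finset.mem_filter.1 hy).1 z hz h
      · obtain ⟨p, hp, rfl⟩ := Finset.mem_image.1 hy
        exact (hold x hx p hp z hz).le
      · obtain ⟨p, hp, rfl⟩ := Finset.mem_image.1 hx
        have := hold y hy p hp (-z) (Λ.neg_mem hz)
        rw [dist_eq_norm] at this ⊢
        have e : t + p - (y + z) = -(y - (t + p + -z)) := by abel
        rw [e, norm_neg]
        exact this.le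
      · obtain ⟨p, hp, rfl⟩ := Finset.mem_image.1 hx
        obtain ⟨q, hq, rfl⟩ := Finset.mem_image.1 hy
        rw [add_assoc, dist_add_left]
        exact hP p hp q hq z hz (h.imp (fun h h' => h (by rw [h'])) id)
    have h1 := hmax _ hPP
    rw [Finset.card_union_of_disjoint hdisj, hP1, hX1,
      Finset.card_image_of_injective _ (add_right_injective t)] at h1
    have h2 := Finset.card_filter_add_card_filter_not (s := X) (fun x => t ∈ W x)
    refine Nat.le_of_add_le_add_left (h1.trans (le_of_eq ?_))
    rw [← h2, add_comm]
  calc (P.card : ℝ≥0∞) * volume F = ∫⁻ t in F, (P.card : ℝ≥0∞) := by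
        rw [setLIntegral_const]
    _ ≤ ∫⁻ t in F, ∑ x ∈ X, (W x).indicator 1 t := by
        refine lintegral_mono fun t => ?_
        have := hbad t
        calc (P.card : ℝ≥0∞) ≤ ((X.filter fun x => t ∈ W x).card : ℝ≥0∞) := by exact_mod_cast this
          _ = _ := by
            simp [Set.indicator]
    _ = ∑ x ∈ X, volume (W x ∩ F) := by
        rw [lintegral_finsetSum _ fun x _ => measurable_one.indicator (hWm x)]
        refine Finset.sum_congr rfl fun x _ => ?_
        rw [lintegral_indicator_one (hWm x), Measure.restrict_apply (hWm x)]
    _ ≤ ∑ x ∈ X, volume U := Finset.sum_le_sum fun x _ => hWv x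
    _ = _ := by simp

theorem packing_ineq {d : ℕ} (P : Finset (EuclideanSpace ℝ (Fin d)))
    (hpack : ∀ x ∈ P, ∀ y ∈ P, x ≠ y → 2 ≤ dist x y) :
    P.card * (volume (Metric.ball (0 : EuclideanSpace ℝ (Fin d)) 1)).toReal ≤
      spherePackingDensity d * (volume (⋃ p ∈ P, Metric.closedBall p 2)).toReal := by
  obtain ⟨D, hD⟩ := Metric.isBounded_iff.1 P.finite_toSet.isBounded
  obtain ⟨Λ, F, hcount, hF, hFm, hFb, hF0, hΛ⟩ :=
    exists_lattice d (|D| + 2) (by positivity)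
  have hFtop : volume F ≠ ∞ := hFb.measure_lt_top.ne
  have hFpos : 0 < (volume F).toReal := ENNReal.toReal_pos hF0 hFtop
  have hP : PP Λ P := PP_of_sep hΛ hpack (fun x hx y hy => hD hx hy)
    (by linarith [le_abs_self D])
  obtain ⟨X, hX, hmax⟩ : ∃ X, PP Λ X ∧ ∀ Y, PP Λ Y → Y.card ≤ X.card := by
    have hne : ∃ n, ∃ X : Finset (EuclideanSpace ℝ (Fin d)), PP Λ X ∧ X.card = n := ⟨_, P, hP, rfl⟩
    have hbd : ∀ n, (∃ X : Finset (EuclideanSpace ℝ (Fin d)), PP Λ X ∧ X.card = n) →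
        n ≤ ⌊(volume F).toReal /
      (volume (Metric.ball (0 : EuclideanSpace ℝ (Fin d)) 1)).toReal⌋₊ := by
      rintro n ⟨X, hX, rfl⟩
      exact PP_card_le hF hFtop hX
    obtain ⟨n0, hn0⟩ := hne
    obtain ⟨X, hX, hXc⟩ := Nat.findGreatest_spec (P := fun n => ∃ X : Finset (EuclideanSpace ℝ (Fin d)),
      PP Λ X ∧ X.card = n) (hbd _ hn0) hn0
    refine ⟨X, hX, fun Y hY => ?_⟩
    rw [hXc]
    exact Nat.le_findGreatest (hbd _ ⟨Y, hY, rfl⟩) ⟨Y, hY, rfl⟩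
  have h1 := PP_density hF hFb hF0 hX
  have hUtop : volume (⋃ p ∈ P, Metric.closedBall p 2) ≠ ∞ :=
    ((measure_biUnion_lt_top P.finite_toSet fun _ _ => measure_closedBall_lt_top)).ne
  have h2 := ENNReal.toReal_mono (ENNReal.mul_ne_top (ENNReal.natCast_ne_top _) hUtop)
    (PP_improve hF hX hP hmax)
  simp only [ENNReal.toReal_mul, ENNReal.toReal_natCast] at h2
  set κ := (volume (Metric.ball (0 : EuclideanSpace ℝ (Fin d)) 1)).toReal
  set u := (volume (⋃ p ∈ P, Metric.closedBall p 2)).toReal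
  have hκ : 0 ≤ κ := ENNReal.toReal_nonneg
  have hu : 0 ≤ u := ENNReal.toReal_nonneg
  refine le_of_mul_le_mul_right ?_ hFpos
  calc P.card * κ * (volume F).toReal = (P.card * (volume F).toReal) * κ := by ring
    _ ≤ (X.card * u) * κ := by gcongr
    _ = (X.card * κ) * u := by ring
    _ ≤ (spherePackingDensity d * (volume F).toReal) * u := by gcongr
    _ = _ := by ring

theorem card_le_kissing {d : ℕ} (S : Finset (EuclideanSpace ℝ (Fin d)))
    (hn : ∀ v ∈ S, ‖v‖ = 2) (hs : ∀ v ∈ S, ∀ w ∈ S, v ≠ w → 2 ≤ dist v w) :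
    S.card ≤ kissingNumber d := by
  refine le_csSup ?_ ⟨fun i => (S.equivFin.symm i : EuclideanSpace ℝ (Fin d)), ?_, ?_⟩
  · obtain ⟨Λ, F, hcount, hF, hFm, hFb, hF0, hΛ⟩ := exists_lattice d 6 (by positivity)
    refine ⟨⌊(volume F).toReal /
      (volume (Metric.ball (0 : EuclideanSpace ℝ (Fin d)) 1)).toReal⌋₊, ?_⟩
    · rintro m ⟨c, hc, hsep⟩
      have hinj : Function.Injective c := by
        intro i j hij
        by_contra hne
        have := hsep i j hne
        rw [hij, dist_self] at this
        linarith
      have hPP : PP Λ (Finset.univ.image c) := by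
        refine PP_of_sep (D := 4) hΛ ?_ ?_ (by norm_num)
        · intro x hx y hy hxy
          obtain ⟨i, -, rfl⟩ := Finset.mem_image.1 hx
          obtain ⟨j, -, rfl⟩ := Finset.mem_image.1 hy
          exact hsep i j fun h => hxy (by rw [h])
        · intro x hx y hy
          obtain ⟨i, -, rfl⟩ := Finset.mem_image.1 hx
          obtain ⟨j, -, rfl⟩ := Finset.mem_image.1 hy
          have := dist_triangle_right (c i) (c j) 0
          rw [hc, hc] at this
          linarith
      have := PP_card_le hF hFb.measure_lt_top.ne hPP
      rwa [Finset.card_image_of_injective _ hinj, Finset.card_univ, Fintype.card_fin] at this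
  · intro i
    rw [dist_zero_right]
    exact hn _ (S.equivFin.symm i).2
  · intro i j hij
    exact hs _ (S.equivFin.symm i).2 _ (S.equivFin.symm j).2
      fun h => hij (S.equivFin.symm.injective (Subtype.ext h))


/-- The centers of `P` touching `p`. -/
def nbrs {d : ℕ} (P : Finset (EuclideanSpace ℝ (Fin d))) (p : EuclideanSpace ℝ (Fin d)) :
    Finset (EuclideanSpace ℝ (Fin d)) :=
  P.filter fun q => p ≠ q ∧ dist p q = 2

theorem contacts_eq {d : ℕ} (P : Finset (EuclideanSpace ℝ (Fin d))) :
    contactsOrdered P = ∑ p ∈ P, (nbrs P p).card := by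
  unfold contactsOrdered
  rw [← Finset.card_sigma]
  refine Finset.card_bij (fun a _ => ⟨a.1, a.2⟩) ?_ ?_ ?_
  · rintro ⟨a, b⟩ h
    simp only [Finset.mem_filter, Finset.mem_offDiag] at h
    simp only [Finset.mem_sigma, nbrs, Finset.mem_filter]
    tauto
  · rintro ⟨a, b⟩ _ ⟨a', b'⟩ _ h
    simpa using h
  · rintro ⟨a, b⟩ h
    simp only [Finset.mem_sigma, nbrs, Finset.mem_filter] at h
    refine ⟨(a, b), ?_, rfl⟩
    simp only [Finset.mem_filter, Finset.mem_offDiag]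
    tauto

theorem dist_ge_of_inner {d : ℕ} {u v : EuclideanSpace ℝ (Fin d)} (hu : ‖u‖ = 2) (hv : ‖v‖ = 2)
    (h : inner ℝ u v ≤ 2) : 2 ≤ dist u v := by
  rw [dist_eq_norm]
  have := norm_sub_sq_real u v
  rw [hu, hv] at this
  nlinarith [norm_nonneg (u - v)]

theorem nbrs_add_le {d : ℕ} {P : Finset (EuclideanSpace ℝ (Fin d))}
    (hpack : ∀ x ∈ P, ∀ y ∈ P, x ≠ y → 2 ≤ dist x y) (p : EuclideanSpace ℝ (Fin d))
    (T : Finset (EuclideanSpace ℝ (Fin d))) (hT : ∀ v ∈ T, ‖v‖ = 2)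
    (hTs : ∀ v ∈ T, ∀ w ∈ T, v ≠ w → 2 ≤ dist v w)
    (hTN : ∀ v ∈ T, ∀ q ∈ nbrs P p, 2 ≤ dist v (q - p)) :
    (nbrs P p).card + T.card ≤ kissingNumber d := by
  have hinj : Function.Injective fun q : EuclideanSpace ℝ (Fin d) => q - p := sub_left_injective
  rw [← Finset.card_image_of_injective (nbrs P p) hinj, ← Finset.card_union_of_disjoint]
  · refine card_le_kissing _ ?_ ?_
    · intro v hv
      rcases Finset.mem_union.1 hv with hv | hv
      · obtain ⟨q, hq, rfl⟩ := Finset.mem_image.1 hv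
        have := (Finset.mem_filter.1 hq).2.2
        rw [dist_comm, dist_eq_norm] at this
        exact this
      · exact hT v hv
    · intro v hv w hw hvw
      rcases Finset.mem_union.1 hv with hv | hv <;> rcases Finset.mem_union.1 hw with hw | hw
      · obtain ⟨q, hq, rfl⟩ := Finset.mem_image.1 hv
        obtain ⟨r, hr, rfl⟩ := Finset.mem_image.1 hw
        rw [dist_sub_right]
        exact hpack q (Finset.mem_filter.1 hq).1 r (Finset.mem_filter.1 hr).1
          fun h => hvw (by rw [h])
      · obtain ⟨q, hq, rfl⟩ := Finset.mem_image.1 hv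
        rw [dist_comm]
        exact hTN w hw q hq
      · obtain ⟨q, hq, rfl⟩ := Finset.mem_image.1 hw
        exact hTN v hv q hq
      · exact hTs v hv w hw hvw
  · rw [Finset.disjoint_left]
    intro v hv hv'
    obtain ⟨q, hq, rfl⟩ := Finset.mem_image.1 hv
    have := hTN _ hv' q hq
    rw [dist_self] at this
    linarith

theorem sat_closer {d : ℕ} {P : Finset (EuclideanSpace ℝ (Fin d))}
    (hpack : ∀ x ∈ P, ∀ y ∈ P, x ≠ y → 2 ≤ dist x y) (p x : EuclideanSpace ℝ (Fin d))
    (hsat : kissingNumber d ≤ (nbrs P p).card) (hx : 2 < dist x p) :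
    ∃ q ∈ P, dist x q < dist x p := by
  set s := dist x p with hs
  have hs0 : 0 < s := by linarith
  have hsn : ‖x - p‖ = s := by rw [hs, dist_eq_norm]
  set v := (2 / s) • (x - p) with hv
  have hvn : ‖v‖ = 2 := by
    rw [hv, norm_smul, hsn, Real.norm_of_nonneg (by positivity)]
    field_simp
  have : ∃ q ∈ nbrs P p, dist v (q - p) < 2 := by
    by_contra hcon
    push Not at hcon
    have := nbrs_add_le hpack p {v} (by simpa using hvn) (by simp) (by simpa using hcon)
    simp at this
    omega
  obtain ⟨q, hq, hvq⟩ := this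
  have hqP := (Finset.mem_filter.1 hq).1
  have hpq := (Finset.mem_filter.1 hq).2.2
  rw [dist_comm, dist_eq_norm] at hpq
  refine ⟨q, hqP, ?_⟩
  have hin : 2 < inner ℝ v (q - p) := by
    by_contra hcon
    have := dist_ge_of_inner hvn hpq (not_lt.1 hcon)
    linarith
  rw [hv, inner_smul_left] at hin
  simp only [conj_trivial] at hin
  have hin2 : s < inner ℝ (x - p) (q - p) := by
    rw [div_mul_eq_mul_div, lt_div_iff₀ hs0] at hin
    linarith
  have h1 := norm_sub_sq_real (x - p) (q - p)
  rw [hsn, hpq, sub_sub_sub_cancel_right, ← dist_eq_norm] at h1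
  nlinarith [dist_nonneg (x := x) (y := q)]

theorem extreme {d : ℕ} (hd : 3 ≤ d) {P : Finset (EuclideanSpace ℝ (Fin d))}
    (hpack : ∀ x ∈ P, ∀ y ∈ P, x ≠ y → 2 ≤ dist x y) (hne : P.Nonempty) :
    ∃ p ∈ P, (nbrs P p).card + 2 ≤ kissingNumber d := by
  let i0 : Fin d := ⟨0, by omega⟩
  let i1 : Fin d := ⟨1, by omega⟩
  have hi : i0 ≠ i1 := by simp [i0, i1]
  obtain ⟨p, hp, hmax⟩ := P.exists_max_image (fun x => x i0) hne
  refine ⟨p, hp, ?_⟩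
  let u : ℝ → EuclideanSpace ℝ (Fin d) := fun c =>
    EuclideanSpace.single i0 (√3) + EuclideanSpace.single i1 c
  have hin : ∀ c v, inner ℝ (u c) v = √3 * v i0 + c * v i1 := by
    intro c v
    simp [u, inner_add_left, EuclideanSpace.inner_single_left]
  have hu0 : ∀ c, u c i0 = √3 := by intro c; simp [u, hi]
  have hu1 : ∀ c, u c i1 = c := by intro c; simp [u, hi.symm]
  have h3 : √3 * √3 = 3 := Real.mul_self_sqrt (by norm_num)
  have hun : ∀ c, c ^ 2 = 1 → ‖u c‖ = 2 := by
    intro c hc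
    have := real_inner_self_eq_norm_sq (u c)
    rw [hin, hu0, hu1, h3] at this
    nlinarith [norm_nonneg (u c)]
  have hsep : 2 ≤ dist (u 1) (u (-1)) := by
    apply dist_ge_of_inner (hun 1 (by norm_num)) (hun _ (by norm_num))
    rw [hin, hu0, hu1, h3]; norm_num
  have hne' : u 1 ≠ u (-1) := by
    intro h
    rw [h, dist_self] at hsep
    linarith
  have hN : ∀ c, c ^ 2 = 1 → ∀ q ∈ nbrs P p, 2 ≤ dist (u c) (q - p) := by
    intro c hc q hq
    have hq' := Finset.mem_filter.1 hq
    have hpq := hq'.2.2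
    rw [dist_comm, dist_eq_norm] at hpq
    apply dist_ge_of_inner (hun c hc) hpq
    rw [hin]
    have h0 : (q - p) i0 ≤ 0 := by
      have := hmax q hq'.1
      simp only [PiLp.sub_apply]
      linarith
    have h1 : |(q - p) i1| ≤ 2 := by
      rw [← hpq, ← Real.norm_eq_abs]
      exact PiLp.norm_apply_le _ _
    have h4 := abs_le.1 h1
    have h5 : 0 ≤ √3 := Real.sqrt_nonneg _
    have hc2 : (c - 1) * (c + 1) = 0 := by linear_combination hc
    have hc3 : c = 1 ∨ c = -1 := by
      rcases mul_eq_zero.1 hc2 with h | h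
      · left; linarith
      · right; linarith
    rcases hc3 with rfl | rfl <;> nlinarith
  have := nbrs_add_le hpack p {u 1, u (-1)} ?_ ?_ ?_
  · rwa [Finset.card_pair hne'] at this
  · intro v hv
    simp only [Finset.mem_insert, Finset.mem_singleton] at hv
    rcases hv with rfl | rfl <;> exact hun _ (by norm_num)
  · intro v hv w hw hvw
    simp only [Finset.mem_insert, Finset.mem_singleton] at hv hw
    rcases hv with rfl | rfl <;> rcases hw with rfl | rfl
    · exact absurd rfl hvw
    · exact hsep
    · rw [dist_comm]; exact hsep
    · exact absurd rfl hvw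
  · intro v hv
    simp only [Finset.mem_insert, Finset.mem_singleton] at hv
    rcases hv with rfl | rfl <;> exact hN _ (by norm_num)

/-- The number of centers with fewer than `k(d)` contacts. -/
def unsat {d : ℕ} (P : Finset (EuclideanSpace ℝ (Fin d))) : Finset (EuclideanSpace ℝ (Fin d)) :=
  P.filter fun p => (nbrs P p).card < kissingNumber d

theorem contacts_le {d : ℕ} (hd : 3 ≤ d) {P : Finset (EuclideanSpace ℝ (Fin d))}
    (hpack : ∀ x ∈ P, ∀ y ∈ P, x ≠ y → 2 ≤ dist x y) (hne : P.Nonempty) :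
    contactsOrdered P + (unsat P).card + 1 ≤ kissingNumber d * P.card := by
  obtain ⟨p0, hp0, h0⟩ := extreme hd hpack hne
  have h1 : ∑ p ∈ P, (if p = p0 then 1 else 0) = 1 := by
    simp [hp0]
  rw [contacts_eq, unsat, Finset.card_filter, ← h1, ← Finset.sum_add_distrib,
    ← Finset.sum_add_distrib, mul_comm, ← smul_eq_mul, ← Finset.sum_const]
  refine Finset.sum_le_sum fun p _ => ?_
  have hle := nbrs_add_le hpack p ∅ (by simp) (by simp) (by simp)
  simp only [Finset.card_empty] at hle
  by_cases hp : p = p0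
  · subst hp
    split_ifs <;> omega
  · split_ifs <;> omega

theorem vol_growth {d : ℕ} {P : Finset (EuclideanSpace ℝ (Fin d))} (hne : P.Nonempty)
    (hpack : ∀ x ∈ P, ∀ y ∈ P, x ≠ y → 2 ≤ dist x y) {ε : ℝ} (hε : 0 < ε) :
    volume (⋃ p ∈ P, Metric.ball p (2 + ε)) ≤ volume (⋃ p ∈ P, Metric.closedBall p 2) +
      (unsat P).card * (ENNReal.ofReal ((2 + ε) ^ d - 2 ^ d) *
        volume (Metric.ball (0 : EuclideanSpace ℝ (Fin d)) 1)) := by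
  have hsub : (⋃ p ∈ P, Metric.ball p (2 + ε)) ⊆ (⋃ p ∈ P, Metric.closedBall p 2) ∪
      ⋃ p ∈ unsat P, (Metric.ball p (2 + ε) \ Metric.closedBall p 2) := by
    intro x hx
    by_cases hxU : x ∈ ⋃ p ∈ P, Metric.closedBall p 2
    · exact Or.inl hxU
    right
    simp only [Set.mem_iUnion, Metric.mem_closedBall, Metric.mem_ball, exists_prop, not_exists,
      not_and, not_le] at hx hxU
    obtain ⟨q, hq, hxq⟩ := hx
    obtain ⟨p, hp, hmin⟩ := P.exists_min_image (fun p => dist x p) hne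
    simp only [Set.mem_iUnion, exists_prop]
    refine ⟨p, ?_, (hmin q hq).trans_lt hxq, by simpa using hxU p hp⟩
    refine Finset.mem_filter.2 ⟨hp, ?_⟩
    by_contra hcon
    obtain ⟨r, hr, hlt⟩ := sat_closer hpack p x (not_lt.1 hcon) (hxU p hp)
    exact absurd (hmin r hr) (not_le.2 hlt)
  refine (measure_mono hsub).trans ((measure_union_le _ _).trans ?_)
  gcongr
  refine (measure_biUnion_finset_le _ _).trans ?_
  rw [← nsmul_eq_mul, ← Finset.sum_const]
  refine Finset.sum_le_sum fun p _ => ?_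
  rcases le_or_gt (2 + ε) 0 with h | h
  · linarith
  rw [measure_sdiff (Metric.closedBall_subset_ball (by linarith))
    measurableSet_closedBall.nullMeasurableSet measure_closedBall_lt_top.ne,
    Measure.addHaar_ball_of_pos _ _ h, Measure.addHaar_closedBall _ _ (by norm_num),
    finrank_euclideanSpace_fin, ENNReal.ofReal_sub _ (by positivity),
    ENNReal.sub_mul (fun _ _ => measure_ball_lt_top.ne)]

theorem unsat_lower {d : ℕ} (hd : 0 < d) {P : Finset (EuclideanSpace ℝ (Fin d))}
    (hpack : ∀ x ∈ P, ∀ y ∈ P, x ≠ y → 2 ≤ dist x y) {ρ : ℝ} (hρ : 0 < ρ)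
    (hvol : volume (⋃ p ∈ P, Metric.closedBall p 2) = ENNReal.ofReal (ρ ^ d) *
      volume (Metric.ball (0 : EuclideanSpace ℝ (Fin d)) 1)) (hne : P.Nonempty) :
    ρ ^ (d - 1) ≤ (unsat P).card * 2 ^ (d - 1) := by
  have key : ∀ ε > 0, ρ ^ (d - 1) ≤ (unsat P).card * (2 + ε) ^ (d - 1) := by
    intro ε hε
    have h1 := BM_grow (C := ⋃ p ∈ P, Metric.ball p (2 + ε))
      (Finset.measurableSet_biUnion _ fun _ _ => measurableSet_closedBall)
      (Finset.measurableSet_biUnion _ fun _ _ => measurableSet_ball) hρ hε hvol ?_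
    swap
    · intro x hx y hy
      simp only [Set.mem_iUnion, Metric.mem_closedBall, Metric.mem_ball, exists_prop] at hx ⊢
      obtain ⟨p, hp, hxp⟩ := hx
      refine ⟨p, hp, ?_⟩
      calc dist (x + y) p ≤ dist (x + y) x + dist x p := dist_triangle _ _ _
        _ < 2 + ε := by rw [dist_self_add_left]; linarith
    have h2 := h1.trans (vol_growth hne hpack hε)
    set κ := volume (Metric.ball (0 : EuclideanSpace ℝ (Fin d)) 1) with hκ
    have hκt : κ ≠ ∞ := measure_ball_lt_top.ne
    have hκ0 : 0 < κ.toReal :=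
      ENNReal.toReal_pos (Metric.measure_ball_pos _ _ one_pos).ne' hκt
    have hpow : (2 : ℝ) ^ d ≤ (2 + ε) ^ d := pow_le_pow_left₀ (by norm_num) (by linarith) _
    rw [hvol] at h2
    have h3 := ENNReal.toReal_mono (by finiteness) h2
    rw [ENNReal.toReal_add (by finiteness) (by finiteness)] at h3
    simp only [ENNReal.toReal_mul, ENNReal.toReal_natCast] at h3
    rw [ENNReal.toReal_ofReal (by positivity), ENNReal.toReal_ofReal (by positivity),
      ENNReal.toReal_ofReal (by linarith)] at h3
    have h4 : (ρ + ε) ^ d ≤ ρ ^ d + (unsat P).card * ((2 + ε) ^ d - 2 ^ d) := by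
      refine le_of_mul_le_mul_right ?_ hκ0
      linarith
    have mono1 : ∀ a : ℝ, 0 ≤ a → d * ε * a ^ (d - 1) ≤ (a + ε) ^ d - a ^ d ∧
        (a + ε) ^ d - a ^ d ≤ d * ε * (a + ε) ^ (d - 1) := by
      intro a ha
      rw [← Commute.mul_geom_sum₂ (Commute.all (a + ε) a) d, add_sub_cancel_left]
      have hconst : ∀ b : ℝ, (d : ℝ) * ε * b = ε * ∑ i ∈ Finset.range d, b := by
        intro b; simp; ring
      rw [hconst, hconst]
      constructor
      · gcongr with i hi
        have hi' := Finset.mem_range.1 hi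
        have : d - 1 = i + (d - 1 - i) := by omega
        conv_lhs => rw [this, pow_add]
        gcongr
        linarith
      · gcongr with i hi
        have hi' := Finset.mem_range.1 hi
        have : d - 1 = i + (d - 1 - i) := by omega
        conv_rhs => rw [this, pow_add]
        gcongr
        linarith
    have h5 := (mono1 ρ hρ.le).1
    have h6 := (mono1 2 (by norm_num)).2
    have hdε : 0 < d * ε := by positivity
    refine le_of_mul_le_mul_left ?_ hdε
    calc d * ε * ρ ^ (d - 1) ≤ (ρ + ε) ^ d - ρ ^ d := h5
      _ ≤ (unsat P).card * ((2 + ε) ^ d - 2 ^ d) := by linarith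
      _ ≤ (unsat P).card * (d * ε * (2 + ε) ^ (d - 1)) := by gcongr
      _ = _ := by ring
  have ht : Filter.Tendsto (fun ε : ℝ => ((unsat P).card : ℝ) * (2 + ε) ^ (d - 1))
      (nhdsWithin 0 (Set.Ioi 0)) (nhds ((unsat P).card * (2 + 0) ^ (d - 1))) := by
    refine Filter.Tendsto.mono_left (Continuous.tendsto (by fun_prop) _) nhdsWithin_le_nhds
  rw [add_zero] at ht
  refine ge_of_tendsto ht ?_
  filter_upwards [self_mem_nhdsWithin] with ε hε using key ε hε


/-- For `n > 1`, `d ≥ 3`, every packing of `n` unit balls in `ℝ^d` has fewer than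
`(1/2)k(d)n - (1/2^d)·δ_d^(-(d-1)/d)·n^((d-1)/d)` touching pairs. -/
theorem contact_upper_bound_dim (n d : ℕ) (hn : 1 < n) (hd : 3 ≤ d)
    (P : Finset (EuclideanSpace ℝ (Fin d))) (hcard : P.card = n)
    (hpack : ∀ x ∈ P, ∀ y ∈ P, x ≠ y → 2 ≤ dist x y) :
    (contactsOrdered P : ℝ) <
      2 * ((1 / 2) * (kissingNumber d) * n -
        (1 / 2 ^ d) * (spherePackingDensity d) ^ (-(((d : ℝ) - 1) / d)) *
          (n : ℝ) ^ (((d : ℝ) - 1) / d)) := by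
  have hne : P.Nonempty := by rw [← Finset.card_pos]; omega
  have hd0 : 0 < d := by omega
  have hdR : (0 : ℝ) < d := by exact_mod_cast hd0
  have hnR : (0 : ℝ) < n := by exact_mod_cast (by omega : 0 < n)
  have h1 := contacts_le hd hpack hne
  have h2 := packing_ineq P hpack
  set κ := volume (Metric.ball (0 : EuclideanSpace ℝ (Fin d)) 1) with hκ
  have hκt : κ ≠ ∞ := measure_ball_lt_top.ne
  have hκ0 : 0 < κ.toReal :=
    ENNReal.toReal_pos (Metric.measure_ball_pos _ _ one_pos).ne' hκt
  set U := volume (⋃ p ∈ P, Metric.closedBall p 2) with hU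
  have hUt : U ≠ ∞ :=
    (measure_biUnion_lt_top P.finite_toSet fun _ _ => measure_closedBall_lt_top).ne
  set δ := spherePackingDensity d with hδ
  rw [hcard] at h1 h2
  have hprod : 0 < δ * U.toReal := lt_of_lt_of_le (by positivity) h2
  have hU0 : 0 < U.toReal := by
    rcases ENNReal.toReal_nonneg.eq_or_lt with h | h
    · rw [← h] at hprod; simp at hprod
    · exact h
  have hδ0 : 0 < δ := by
    by_contra hcon
    nlinarith [not_lt.1 hcon]
  set ρ := (U.toReal / κ.toReal) ^ ((1 : ℝ) / d) with hρ
  have hρ0 : 0 < ρ := by positivity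
  have hρd : ρ ^ d = U.toReal / κ.toReal := by
    rw [hρ, ← Real.rpow_natCast, ← Real.rpow_mul (by positivity)]
    simp [hd0.ne']
  have hvol : U = ENNReal.ofReal (ρ ^ d) * κ := by
    rw [hρd, ← ENNReal.ofReal_toReal hκt, ← ENNReal.ofReal_mul (by positivity),
      ENNReal.toReal_ofReal (by positivity), div_mul_cancel₀ _ hκ0.ne', ENNReal.ofReal_toReal hUt]
  have h3 := unsat_lower hd0 hpack hρ0 hvol hne
  have h4 : (n : ℝ) / δ ≤ ρ ^ d := by
    rw [hρd, div_le_div_iff₀ hδ0 hκ0]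
    linarith
  have ha : 0 ≤ ((d : ℝ) - 1) / d := by
    have : (3 : ℝ) ≤ d := by exact_mod_cast hd
    apply div_nonneg <;> linarith
  have h5 : δ ^ (-(((d : ℝ) - 1) / d)) * (n : ℝ) ^ (((d : ℝ) - 1) / d) ≤ ρ ^ (d - 1) := by
    calc δ ^ (-(((d : ℝ) - 1) / d)) * (n : ℝ) ^ (((d : ℝ) - 1) / d)
        = ((n : ℝ) / δ) ^ (((d : ℝ) - 1) / d) := by
          rw [Real.div_rpow hnR.le hδ0.le, Real.rpow_neg hδ0.le]
          field_simp
      _ ≤ (ρ ^ d) ^ (((d : ℝ) - 1) / d) := Real.rpow_le_rpow (by positivity) h4 ha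
      _ = ρ ^ (d - 1) := by
          rw [← Real.rpow_natCast, ← Real.rpow_mul hρ0.le, mul_div_cancel₀ _ hdR.ne',
            ← Real.rpow_natCast, Nat.cast_sub (by omega), Nat.cast_one]
  have h6 : 2 * ((1 / 2 ^ d) * (δ ^ (-(((d : ℝ) - 1) / d)) * (n : ℝ) ^ (((d : ℝ) - 1) / d))) ≤
      (unsat P).card := by
    have e : (2 : ℝ) ^ d = 2 * 2 ^ (d - 1) := by
      rw [← pow_succ']; congr 1; omega
    have h7 := h5.trans h3
    have hp : (0 : ℝ) < 2 ^ (d - 1) := by positivity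
    rw [e]
    calc _ = (δ ^ (-(((d : ℝ) - 1) / d)) * (n : ℝ) ^ (((d : ℝ) - 1) / d)) / 2 ^ (d - 1) := by
          field_simp
      _ ≤ _ := by rw [div_le_iff₀ hp]; exact h7
  have h8 : (contactsOrdered P : ℝ) + (unsat P).card + 1 ≤ kissingNumber d * n := by
    exact_mod_cast h1
  have e : ∀ a b c : ℝ, a * b * c = a * (b * c) := mul_assoc
  rw [e (1 / 2 ^ d)]
  linarith
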